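/- Let n ≥ 5 and consider the weight vector L = (0,3,0,…,0,2,0) in ℙⁿ, i.e., l₁ = 3, l_{n−3} = 2 and all other entries zero. Then L is non-feasible: for a generic configuration of three lines and two (n−3)-dimensional linear subspaces in ℙⁿ(ℂ), there is no rational normal curve meeting each line in exactly 2 points and each (n−3)-dimensional subspace in exactly n−2 points. -/

import Mathlib

noncomputable section

/-- Projective space `ℙⁿ(ℂ)`, the projectivization of `ℂ^{n+1}`. -/
abbrev PP (k : ℕ) := Projectivization ℂ (Fin (k + 1) → ℂ)

/-- The vector of the monomials `s^k t^(n-k)`, used to parametrize rational normal curves. -/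
def veron (n : ℕ) (v : Fin 2 → ℂ) : Fin (n + 1) → ℂ :=
  fun k => v 0 ^ (k : ℕ) * v 1 ^ (n - (k : ℕ))

/-- `C ⊆ ℙⁿ` is a rational normal curve if it is the image of `[s:t] ↦ [F₀(s,t):⋯:Fₙ(s,t)]`
for a basis `F₀,…,Fₙ` of the degree-`n` binary forms; such a basis is encoded by an
invertible matrix of coefficients applied to the monomial vector `veron`. -/
def IsRNC (n : ℕ) (C : Set (PP n)) : Prop :=
  ∃ M : Matrix (Fin (n + 1)) (Fin (n + 1)) ℂ, IsUnit M.det ∧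
    C = {P : PP n | ∃ v : Fin 2 → ℂ, v ≠ 0 ∧ ∃ c : ℂ, c ≠ 0 ∧
      P.rep = c • M.mulVec (veron n v)}

/-- The linear subspace of `ℙⁿ` given as the projectivization of the column span of a matrix. -/
def projSet {n m : ℕ} (A : Matrix (Fin (n + 1)) (Fin m) ℂ) : Set (PP n) :=
  {P : PP n | P.rep ∈ Submodule.span ℂ (Set.range fun j => fun r => A r j)}

/-- A configuration of weight `L = (l₀,…,l_{n-2})`: for each `i`, `lᵢ` matrices of size
`(n+1) × (i+1)`, whose column spans give the `i`-dimensional components. -/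
abbrev Config (n : ℕ) (L : Fin (n - 1) → ℕ) :=
  (i : Fin (n - 1)) → Fin (L i) → Matrix (Fin (n + 1)) (Fin (i.1 + 1)) ℂ

/-- All matrices of the configuration have full rank. -/
def FullRank {n : ℕ} {L : Fin (n - 1) → ℕ} (A : Config n L) : Prop :=
  ∀ i j, (A i j).rank = i.1 + 1

/-- A curve `C` maximally intersects the configuration `A`: it meets every `i`-dimensional
component in exactly `i+1` distinct points. -/
def MaxIntersects {n : ℕ} {L : Fin (n - 1) → ℕ} (C : Set (PP n)) (A : Config n L) : Prop :=
  ∀ i j, (C ∩ projSet (A i j)).ncard = i.1 + 1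

/-- A property `Q` holds for a generic configuration of weight `L`: there is a nonzero
polynomial in the matrix entries such that `Q` holds at every full-rank tuple of matrices
where the polynomial does not vanish. -/
def GenHolds (n : ℕ) (L : Fin (n - 1) → ℕ) (Q : Config n L → Prop) : Prop :=
  ∃ F : MvPolynomial ((i : Fin (n - 1)) × (Fin (L i) × Fin (n + 1) × Fin (i.1 + 1))) ℂ,
    F ≠ 0 ∧ ∀ A : Config n L, FullRank A →
      MvPolynomial.eval (fun p => A p.1 p.2.1 p.2.2.1 p.2.2.2) F ≠ 0 → Q A

/-- `L` is feasible: a generic configuration of weight `L` is maximally intersected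
by some rational normal curve. -/
def Feasible (n : ℕ) (L : Fin (n - 1) → ℕ) : Prop :=
  GenHolds n L fun A => ∃ C : Set (PP n), IsRNC n C ∧ MaxIntersects C A

/-- `L` is non-feasible: for a generic configuration of weight `L`, no rational normal
curve maximally intersects it. -/
def NonFeasible (n : ℕ) (L : Fin (n - 1) → ℕ) : Prop :=
  GenHolds n L fun A => ¬ ∃ C : Set (PP n), IsRNC n C ∧ MaxIntersects C A


def wdg (v w : Fin 2 → ℂ) : ℂ := v 0 * w 1 - v 1 * w 0

theorem wdg_prop {t v : Fin 2 → ℂ} (hv : v ≠ 0) (h : wdg t v = 0) : ∃ l : ℂ, t = l • v := by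
  unfold wdg at h
  by_cases h0 : v 0 = 0
  · have h1 : v 1 ≠ 0 := by
      intro h1
      apply hv
      ext i
      fin_cases i
      · exact h0
      · exact h1
    refine ⟨t 1 / v 1, ?_⟩
    ext i
    fin_cases i
    · have : t 0 = 0 := by
        rw [h0] at h
        have : t 0 * v 1 = 0 := by linear_combination h
        exact (mul_eq_zero.mp this).resolve_right h1
      simp [this, h0]
    · simp [h1]
  · refine ⟨t 0 / v 0, ?_⟩
    ext i
    fin_cases i
    · simp [h0]
    · simp only [Pi.smul_apply, smul_eq_mul, Fin.mk_one]
      field_simp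
      linear_combination -h

theorem veron_smul (n : ℕ) (l : ℂ) (v : Fin 2 → ℂ) : veron n (l • v) = l ^ n • veron n v := by
  ext k
  have : l ^ n = l ^ (k : ℕ) * l ^ (n - (k : ℕ)) := by
    rw [← pow_add]; congr 1; have := k.2; omega
  simp only [veron, Pi.smul_apply, smul_eq_mul, mul_pow, this]
  ring

theorem exists_avoid (n : ℕ) (w : Fin n → Fin 2 → ℂ) (hw : ∀ k, w k ≠ 0) :
    ∃ w0 : Fin 2 → ℂ, ∀ k, wdg w0 (w k) ≠ 0 := by
  obtain ⟨z, hz⟩ := Set.Infinite.exists_notMem_finset (s := (Set.univ : Set ℂ)) Set.infinite_univ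
    (Finset.univ.image fun k => w k 0 / w k 1)
  refine ⟨![z, 1], fun k h => ?_⟩
  have h' : z * w k 1 - w k 0 = 0 := by simpa [wdg] using h
  by_cases h1 : w k 1 = 0
  · apply hw k
    ext i
    fin_cases i
    · simpa [h1] using h'
    · exact h1
  · apply hz.2
    simp only [Finset.mem_image, Finset.mem_univ, true_and]
    refine ⟨k, ?_⟩
    field_simp
    linear_combination -h'

def vmat (n : ℕ) (w : Fin (n + 1) → Fin 2 → ℂ) : Matrix (Fin (n + 1)) (Fin (n + 1)) ℂ :=
  Matrix.of fun i => veron n (w i)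

theorem vmat_det (n : ℕ) (w : Fin (n + 1) → Fin 2 → ℂ) :
    (vmat n w).det = ∏ i, ∏ j ∈ Finset.Ioi i, wdg (w j) (w i) := by
  have : vmat n w = Matrix.projVandermonde (fun i => w i 0) (fun i => w i 1) := by
    ext i j
    simp only [vmat, Matrix.of_apply, veron, Matrix.projVandermonde_apply, Fin.val_rev]
    congr 2
    omega
  rw [this, Matrix.det_projVandermonde]
  simp only [wdg]
  refine Finset.prod_congr rfl fun i _ => Finset.prod_congr rfl fun j _ => by ring

theorem form_lemma (n : ℕ) (w : Fin n → Fin 2 → ℂ) (hw0 : ∀ k, w k ≠ 0)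
    (hw : ∀ i j, i ≠ j → wdg (w i) (w j) ≠ 0) (ℓ : (Fin (n + 1) → ℂ) →ₗ[ℂ] ℂ)
    (hl : ∀ k, ℓ (veron n (w k)) = 0) :
    ∃ c : ℂ, ∀ v, ℓ (veron n v) = c * ∏ k, wdg v (w k) := by
  obtain ⟨w0, h0⟩ := exists_avoid n w hw0
  set V := vmat n (Fin.cons w0 w) with hV
  set K : ℂ := ∏ i : Fin n, ∏ j ∈ Finset.Ioi i, wdg (w j) (w i) with hK
  have key : ∀ v, (vmat n (Fin.cons v w)).det = (∏ k, wdg (w k) v) * K := by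
    intro v
    rw [vmat_det, Fin.prod_univ_succ, Fin.prod_Ioi_zero]
    simp only [Fin.prod_Ioi_succ, Fin.cons_zero, Fin.cons_succ]
    rfl
  have anti : ∀ a b, wdg a b = - wdg b a := by intro a b; simp only [wdg]; ring
  have hK0 : K ≠ 0 := by
    refine Finset.prod_ne_zero_iff.mpr fun i _ => Finset.prod_ne_zero_iff.mpr fun j hj => ?_
    exact hw _ _ (Finset.mem_Ioi.mp hj).ne'
  have hD0 : V.det ≠ 0 := by
    rw [hV, key]
    refine mul_ne_zero (Finset.prod_ne_zero_iff.mpr fun k _ => ?_) hK0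
    rw [anti]; exact neg_ne_zero.mpr (h0 k)
  have upd : ∀ v, vmat n (Fin.cons v w) = V.updateRow 0 (veron n v) := by
    intro v
    ext i j
    refine Fin.cases ?_ (fun i => ?_) i
    · simp [vmat]
    · simp [vmat, V, Matrix.updateRow_apply]
  have main : ∀ z, ℓ z * V.det = ℓ (veron n w0) * (V.updateRow 0 z).det := by
    intro z
    set a := Matrix.vecMul z V⁻¹ with ha
    have hz : z = ∑ i, a i • V i := by
      have : Matrix.vecMul a V = z := by
        rw [ha, Matrix.vecMul_vecMul, Matrix.nonsing_inv_mul _ (Ne.isUnit hD0), Matrix.vecMul_one]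
      rw [← this, Matrix.vecMul_eq_sum]
    have h1 : ℓ z = a 0 * ℓ (veron n w0) := by
      rw [hz, map_sum, Fin.sum_univ_succ]
      have : ∀ i : Fin n, ℓ (a i.succ • V i.succ) = 0 := by
        intro i
        rw [map_smul]
        have : V i.succ = veron n (w i) := by ext; simp [V, vmat]
        rw [this, hl]; simp
      simp only [this]
      have : V 0 = veron n w0 := by ext; simp [V, vmat]
      simp [this]
    have h2 : (V.updateRow 0 z).det = a 0 * V.det := by
      rw [hz, Matrix.det_updateRow_sum]
      simp
    rw [h1, h2]; ring
  refine ⟨ℓ (veron n w0) * ((-1) ^ n * K) / V.det, fun v => ?_⟩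
  have := main (veron n v)
  rw [← upd, key v] at this
  have e : ∏ k, wdg (w k) v = (-1) ^ n * ∏ k, wdg v (w k) := by
    rw [Finset.prod_congr rfl fun k _ => anti (w k) v, Finset.prod_neg]
    simp
  rw [e] at this
  field_simp
  linear_combination this

theorem extract {n m k : ℕ} (M : Matrix (Fin (n + 1)) (Fin (n + 1)) ℂ) (C : Set (PP n))
    (hC : C = {P : PP n | ∃ v : Fin 2 → ℂ, v ≠ 0 ∧ ∃ c : ℂ, c ≠ 0 ∧
      P.rep = c • M.mulVec (veron n v)}) (A : Matrix (Fin (n + 1)) (Fin m) ℂ)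
    (h : (C ∩ projSet A).ncard = k + 1) :
    ∃ v : Fin (k + 1) → Fin 2 → ℂ, (∀ i, v i ≠ 0) ∧ (∀ i, M.mulVec (veron n (v i)) ≠ 0) ∧
      (∀ i j, i ≠ j → ∀ c : ℂ, M.mulVec (veron n (v i)) ≠ c • M.mulVec (veron n (v j))) ∧
      (∀ i j, i ≠ j → wdg (v i) (v j) ≠ 0) ∧
      (∀ i, M.mulVec (veron n (v i)) ∈
        Submodule.span ℂ (Set.range fun j => fun r => A r j)) := by
  have hfin : (C ∩ projSet A).Finite := Set.finite_of_ncard_ne_zero (by omega)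
  have hcard : hfin.toFinset.card = k + 1 := by rw [← Set.ncard_eq_toFinset_card _ hfin, h]
  let e := (Finset.equivFinOfCardEq hcard).symm
  have hm : ∀ i, ((e i : PP n)) ∈ C ∩ projSet A := fun i => hfin.mem_toFinset.mp (e i).2
  have hm1 : ∀ i, ∃ v : Fin 2 → ℂ, v ≠ 0 ∧ ∃ c : ℂ, c ≠ 0 ∧
      (e i : PP n).rep = c • M.mulVec (veron n v) := by
    intro i
    have := (hm i).1
    exact (Set.ext_iff.mp hC _).mp this
  choose v hv c hc hr using hm1
  have hnp : ∀ i j, i ≠ j → ∀ c : ℂ,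
      M.mulVec (veron n (v i)) ≠ c • M.mulVec (veron n (v j)) := by
    intro i j hij d hd
    apply hij
    apply e.injective
    apply Subtype.ext
    rw [← Projectivization.mk_rep (e i : PP n), ← Projectivization.mk_rep (e j : PP n),
      Projectivization.mk_eq_mk_iff']
    refine ⟨c i * d * (c j)⁻¹, ?_⟩
    rw [hr i, hr j, hd, smul_smul, smul_smul]
    congr 1
    have := hc j
    field_simp
  refine ⟨v, hv, ?_, hnp, ?_, ?_⟩
  · intro i h0
    apply (e i : PP n).rep_nonzero
    rw [hr i, h0, smul_zero]
  · intro i j hij h0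
    obtain ⟨l, hl⟩ := wdg_prop (hv j) h0
    apply hnp i j hij (l ^ n)
    rw [hl, veron_smul, Matrix.mulVec_smul]
  · intro i
    have h2 : (e i : PP n).rep ∈ Submodule.span ℂ (Set.range fun j => fun r => A r j) := (hm i).2
    rw [hr i] at h2
    exact (Submodule.smul_mem_iff _ (hc i)).mp h2

def br {m : ℕ} {R : Type*} [CommRing R] (P : Matrix (Fin (m + 3 + 1)) (Fin (m + 1)) R)
    (u v w : Fin (m + 3 + 1) → R) : R :=
  Matrix.det (Matrix.of fun a b : Fin (m + 1) ⊕ Fin 3 =>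
    (Sum.elim (fun j => fun r => P r j) ![u, v, w] : _ → Fin (m + 3 + 1) → R) a
      (finSumFinEquiv (m := m + 1) (n := 3) b))

theorem br_map {m : ℕ} {R S : Type*} [CommRing R] [CommRing S] (φ : R →+* S)
    (P : Matrix (Fin (m + 3 + 1)) (Fin (m + 1)) R) (u v w : Fin (m + 3 + 1) → R) :
    φ (br P u v w) = br (P.map φ) (fun r => φ (u r)) (fun r => φ (v r)) (fun r => φ (w r)) := by
  unfold br
  rw [RingHom.map_det]
  congr 1
  ext a b
  rcases a with a | a
  · simp
  · fin_cases a <;> simp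

theorem br_upd {m : ℕ} {R : Type*} [CommRing R] (P : Matrix (Fin (m + 3 + 1)) (Fin (m + 1)) R)
    (u v w : Fin (m + 3 + 1) → R) : br P u v w = Matrix.det (Matrix.updateRow
      (Matrix.of fun a b : Fin (m + 1) ⊕ Fin 3 =>
    (Sum.elim (fun j => fun r => P r j) ![0, v, w] : _ → Fin (m + 3 + 1) → R) a
      (finSumFinEquiv (m := m + 1) (n := 3) b)) (Sum.inr 0)
      (fun b => u (finSumFinEquiv (m := m + 1) (n := 3) b))) := by
  unfold br
  congr 1
  ext a b
  rcases a with a | a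
  · simp [Matrix.updateRow_apply]
  · fin_cases a <;> simp [Matrix.updateRow_apply]

def brl {m : ℕ} (P : Matrix (Fin (m + 3 + 1)) (Fin (m + 1)) ℂ)
    (v w : Fin (m + 3 + 1) → ℂ) : (Fin (m + 3 + 1) → ℂ) →ₗ[ℂ] ℂ where
  toFun u := br P u v w
  map_add' x y := by
    simp only [br_upd, ← Matrix.det_updateRow_add]
    rfl
  map_smul' c x := by
    simp only [br_upd, RingHom.id_apply, smul_eq_mul, ← Matrix.det_updateRow_smul]
    rfl

theorem brl_span {m : ℕ} (P : Matrix (Fin (m + 3 + 1)) (Fin (m + 1)) ℂ)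
    (v w u : Fin (m + 3 + 1) → ℂ)
    (h : u ∈ Submodule.span ℂ (Set.range fun j => fun r => P r j)) : brl P v w u = 0 := by
  have : Submodule.span ℂ (Set.range fun j => fun r => P r j) ≤ LinearMap.ker (brl P v w) := by
    rw [Submodule.span_le]
    rintro _ ⟨j, rfl⟩
    change br P _ v w = 0
    exact Matrix.det_zero_of_row_eq (i := Sum.inl j) (j := Sum.inr 0) (by simp) (by ext; simp)
  exact this h

theorem brl_self1 {m : ℕ} (P : Matrix (Fin (m + 3 + 1)) (Fin (m + 1)) ℂ)
    (v w : Fin (m + 3 + 1) → ℂ) : brl P v w v = 0 :=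
  Matrix.det_zero_of_row_eq (i := Sum.inr 1) (j := Sum.inr 0) (by simp) (by ext; simp)

theorem brl_self2 {m : ℕ} (P : Matrix (Fin (m + 3 + 1)) (Fin (m + 1)) ℂ)
    (v w : Fin (m + 3 + 1) → ℂ) : brl P v w w = 0 :=
  Matrix.det_zero_of_row_eq (i := Sum.inr 2) (j := Sum.inr 0) (by simp) (by ext; simp)

def ey {R : Type*} [CommRing R] (xa xb ya yb : Fin 3 → Fin 3 → R) (j i : Fin 3) : R :=
  xb j i * ya j i - xa j i * yb j i

def nd {R : Type*} [CommRing R] (xa xb ya yb : Fin 3 → Fin 3 → R) (i j k : Fin 3) : R :=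
  (xb j i * xa k i - xa j i * xb k i) * (yb j i * ya k i - ya j i * yb k i) *
    (ey xa xb ya yb j i * ey xa xb ya yb k i)

def carnot {R : Type*} [CommRing R] (xa xb ya yb : Fin 3 → Fin 3 → R) : R :=
  ey xa xb ya yb 1 0 * ey xa xb ya yb 2 1 * ey xa xb ya yb 0 2 -
    ey xa xb ya yb 2 0 * ey xa xb ya yb 0 1 * ey xa xb ya yb 1 2

def fullF {R : Type*} [CommRing R] (xa xb ya yb : Fin 3 → Fin 3 → R) : R :=
  nd xa xb ya yb 0 1 2 * nd xa xb ya yb 1 2 0 * nd xa xb ya yb 2 0 1 * carnot xa xb ya yb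

def genF {m : ℕ} {R : Type*} [CommRing R] (P1 P2 : Matrix (Fin (m + 3 + 1)) (Fin (m + 1)) R)
    (a b : Fin 3 → Fin (m + 3 + 1) → R) : R :=
  fullF (fun j i => br P1 (a i) (a j) (b j)) (fun j i => br P1 (b i) (a j) (b j))
    (fun j i => br P2 (a i) (a j) (b j)) (fun j i => br P2 (b i) (a j) (b j))

theorem genF_map {m : ℕ} {R S : Type*} [CommRing R] [CommRing S] (φ : R →+* S)
    (P1 P2 : Matrix (Fin (m + 3 + 1)) (Fin (m + 1)) R) (a b : Fin 3 → Fin (m + 3 + 1) → R) :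
    φ (genF P1 P2 a b) =
      genF (P1.map φ) (P2.map φ) (fun i r => φ (a i r)) (fun i r => φ (b i r)) := by
  simp only [genF, fullF, nd, carnot, ey, map_mul, map_sub, br_map]

/-- evaluation of the bracket when the subspace is a coordinate subspace -/
theorem br_coord {m : ℕ} (τ : Equiv.Perm (Fin (m + 1) ⊕ Fin 3))
    (P : Matrix (Fin (m + 3 + 1)) (Fin (m + 1)) ℂ)
    (hP : ∀ r j, P r j = if r = finSumFinEquiv (m := m + 1) (n := 3) (τ (Sum.inl j)) then 1 else 0)
    (u v w : Fin (m + 3 + 1) → ℂ) :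
    br P u v w = ((Equiv.Perm.sign τ : ℤ) : ℂ) * Matrix.det (Matrix.of fun k l : Fin 3 =>
      (![u, v, w] k) (finSumFinEquiv (m := m + 1) (n := 3) (τ (Sum.inr l)))) := by
  set N : Matrix (Fin (m + 1) ⊕ Fin 3) (Fin (m + 1) ⊕ Fin 3) ℂ := Matrix.of fun a b =>
    (Sum.elim (fun j => fun r => P r j) ![u, v, w] : _ → Fin (m + 3 + 1) → ℂ) a
      (finSumFinEquiv (m := m + 1) (n := 3) b) with hN
  have h1 := Matrix.det_permute' τ N
  have h2 : N.submatrix id τ = Matrix.fromBlocks 1 0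
      (Matrix.of fun k j => N (Sum.inr k) (τ (Sum.inl j)))
      (Matrix.of fun k l => N (Sum.inr k) (τ (Sum.inr l))) := by
    ext a b
    rcases a with a | a <;> rcases b with b | b
    · simp [hN, hP, Matrix.one_apply, eq_comm]
    · simp [hN, hP]
    · simp
    · simp
  rw [h2, Matrix.det_fromBlocks_zero₁₂, Matrix.det_one, one_mul] at h1
  have h3 : ((Equiv.Perm.sign τ : ℤ) : ℂ) * ((Equiv.Perm.sign τ : ℤ) : ℂ) = 1 := by
    rcases Int.units_eq_one_or (Equiv.Perm.sign τ) with h | h <;> simp [h]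
  have h4 : br P u v w = N.det := rfl
  rw [h4]
  have h5 : (Matrix.of fun k l : Fin 3 =>
      (![u, v, w] k) (finSumFinEquiv (m := m + 1) (n := 3) (τ (Sum.inr l)))) =
      (Matrix.of fun k l => N (Sum.inr k) (τ (Sum.inr l))) := rfl
  rw [h5, h1, ← mul_assoc, h3, one_mul]

theorem line_lemma {a2 b2 a3 b3 c2 d2 c3 d3 s u s' u' l μ : ℂ} (hd : s * u' - s' * u ≠ 0)
    (h : l * (s * c2 + u * d2) * (s * a3 + u * b3) = μ * (s * c3 + u * d3) * (s * a2 + u * b2))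
    (h' : l * (s' * c2 + u' * d2) * (s' * a3 + u' * b3) =
      μ * (s' * c3 + u' * d3) * (s' * a2 + u' * b2)) :
    l * (b2 * c2 - a2 * d2) * (s * a3 + u * b3) * (s' * a3 + u' * b3) =
      μ * (b3 * c3 - a3 * d3) * (s * a2 + u * b2) * (s' * a2 + u' * b2) := by
  apply mul_left_cancel₀ hd
  linear_combination (s' * a2 + u' * b2) * (s' * a3 + u' * b3) * h -
    (s * a2 + u * b2) * (s * a3 + u * b3) * h'

theorem lin2 {a b c d s u : ℂ} (h1 : s * a + u * b = 0) (h2 : s * c + u * d = 0)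
    (h : b * c - a * d ≠ 0) : s = 0 ∧ u = 0 := by
  constructor
  · apply (mul_eq_zero.mp (_ : s * (b * c - a * d) = 0)).resolve_right h
    linear_combination b * h2 - d * h1
  · apply (mul_eq_zero.mp (_ : u * (b * c - a * d) = 0)).resolve_right h
    linear_combination c * h1 - a * h2

theorem line_core {xaj xbj xak xbk yaj ybj yak ybk S0 U0 S1 U1 cj ck dj dk f0 f1 g0 g1
    hj0 hj1 hk0 hk1 : ℂ} (hd : S0 * U1 - S1 * U0 ≠ 0)
    (hx : xbj * xak - xaj * xbk ≠ 0) (_hy : ybj * yak - yaj * ybk ≠ 0)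
    (hej : xbj * yaj - xaj * ybj ≠ 0) (hek : xbk * yak - xak * ybk ≠ 0)
    (xj0 : S0 * xaj + U0 * xbj = cj * (hj0 * f0)) (xj1 : S1 * xaj + U1 * xbj = cj * (hj1 * f1))
    (xk0 : S0 * xak + U0 * xbk = ck * (hk0 * f0)) (xk1 : S1 * xak + U1 * xbk = ck * (hk1 * f1))
    (yj0 : S0 * yaj + U0 * ybj = dj * (hj0 * g0)) (yj1 : S1 * yaj + U1 * ybj = dj * (hj1 * g1))
    (yk0 : S0 * yak + U0 * ybk = dk * (hk0 * g0)) (yk1 : S1 * yak + U1 * ybk = dk * (hk1 * g1)) :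
    cj ≠ 0 ∧ dj ≠ 0 ∧ hj0 * hj1 ≠ 0 ∧ hk0 * hk1 ≠ 0 ∧
      dk * ck * (hk0 * hk1) * (xbj * yaj - xaj * ybj) =
      dj * cj * (hj0 * hj1) * (xbk * yak - xak * ybk) := by
  have n0 : ¬ (S0 = 0 ∧ U0 = 0) := by rintro ⟨h, h'⟩; apply hd; rw [h, h']; ring
  have n1 : ¬ (S1 = 0 ∧ U1 = 0) := by rintro ⟨h, h'⟩; apply hd; rw [h, h']; ring
  have hd' : U0 * S1 - S0 * U1 ≠ 0 := by
    intro h; apply hd; linear_combination -h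
  have cj0 : cj ≠ 0 := by
    rintro rfl
    obtain ⟨h, h'⟩ := lin2 (s := xaj) (u := xbj) (a := S0) (b := U0) (c := S1) (d := U1)
      (by linear_combination xj0) (by linear_combination xj1) hd'
    apply hej; rw [h, h']; ring
  have ck0 : ck ≠ 0 := by
    rintro rfl
    obtain ⟨h, h'⟩ := lin2 (s := xak) (u := xbk) (a := S0) (b := U0) (c := S1) (d := U1)
      (by linear_combination xk0) (by linear_combination xk1) hd'
    apply hek; rw [h, h']; ring
  have dj0 : dj ≠ 0 := by
    rintro rfl
    obtain ⟨h, h'⟩ := lin2 (s := yaj) (u := ybj) (a := S0) (b := U0) (c := S1) (d := U1)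
      (by linear_combination yj0) (by linear_combination yj1) hd'
    apply hej; rw [h, h']; ring
  have f00 : f0 ≠ 0 := by
    rintro rfl
    exact n0 (lin2 (by linear_combination xj0) (by linear_combination xk0) hx)
  have f10 : f1 ≠ 0 := by
    rintro rfl
    exact n1 (lin2 (by linear_combination xj1) (by linear_combination xk1) hx)
  have a1 : hj0 ≠ 0 := by
    rintro rfl
    exact n0 (lin2 (by linear_combination xj0) (by linear_combination yj0) hej)
  have a2 : hj1 ≠ 0 := by
    rintro rfl
    exact n1 (lin2 (by linear_combination xj1) (by linear_combination yj1) hej)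
  have a3 : hk0 ≠ 0 := by
    rintro rfl
    exact n0 (lin2 (by linear_combination xk0) (by linear_combination yk0) hek)
  have a4 : hk1 ≠ 0 := by
    rintro rfl
    exact n1 (lin2 (by linear_combination xk1) (by linear_combination yk1) hek)
  refine ⟨cj0, dj0, mul_ne_zero a1 a2, mul_ne_zero a3 a4, ?_⟩
  have L := line_lemma (a2 := xaj) (b2 := xbj) (a3 := xak) (b3 := xbk) (c2 := yaj) (d2 := ybj)
    (c3 := yak) (d3 := ybk) (l := cj * dk) (μ := ck * dj) hd
    (by rw [xj0, xk0, yj0, yk0]; ring) (by rw [xj1, xk1, yj1, yk1]; ring)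
  rw [xj0, xj1, xk0, xk1] at L
  apply mul_left_cancel₀ (mul_ne_zero (mul_ne_zero cj0 ck0) (mul_ne_zero f00 f10))
  linear_combination L

theorem formL {m : ℕ} (M : Matrix (Fin (m + 3 + 1)) (Fin (m + 3 + 1)) ℂ)
    (vs : Fin (m + 1) → Fin 2 → ℂ) (hv0 : ∀ i, vs i ≠ 0)
    (hv : ∀ i j, i ≠ j → wdg (vs i) (vs j) ≠ 0)
    (t : Fin 2 → Fin 2 → ℂ) (ht0 : ∀ i, t i ≠ 0) (ht : wdg (t 0) (t 1) ≠ 0)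
    (htv : ∀ e k, wdg (t e) (vs k) ≠ 0)
    (ℓ : (Fin (m + 3 + 1) → ℂ) →ₗ[ℂ] ℂ)
    (h1 : ∀ k, ℓ (M.mulVec (veron (m + 3) (vs k))) = 0)
    (h2 : ∀ e, ℓ (M.mulVec (veron (m + 3) (t e))) = 0) :
    ∃ c : ℂ, ∀ v, ℓ (M.mulVec (veron (m + 3) v)) =
      c * (wdg v (t 0) * wdg v (t 1) * ∏ k, wdg v (vs k)) := by
  have anti : ∀ a b, wdg a b = - wdg b a := by intro a b; simp only [wdg]; ring
  have anti' : ∀ a b, wdg a b ≠ 0 → wdg b a ≠ 0 := by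
    intro a b h; rw [anti]; exact neg_ne_zero.mpr h
  have g1 : ∀ k, (Fin.cons (t 0) (Fin.cons (t 1) vs : Fin (m + 2) → Fin 2 → ℂ) : Fin (m + 3) → Fin 2 → ℂ) k ≠ 0 := by
    intro k
    refine Fin.cases ?_ (fun k => Fin.cases ?_ (fun k => ?_) k) k
    · exact ht0 0
    · exact ht0 1
    · exact hv0 k
  have g2 : ∀ i j, i ≠ j → wdg ((Fin.cons (t 0) (Fin.cons (t 1) vs : Fin (m + 2) → Fin 2 → ℂ) : Fin (m + 3) → Fin 2 → ℂ) i) ((Fin.cons (t 0) (Fin.cons (t 1) vs : Fin (m + 2) → Fin 2 → ℂ) : Fin (m + 3) → Fin 2 → ℂ) j) ≠ 0 := by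
    intro i j
    refine Fin.cases ?_ (fun i => Fin.cases ?_ (fun i => ?_) i) i <;>
    refine Fin.cases ?_ (fun j => Fin.cases ?_ (fun j => ?_) j) j <;>
    simp only [Fin.cons_zero, Fin.cons_succ] <;> intro hij
    · exact absurd rfl hij
    · exact ht
    · exact htv _ _
    · exact anti' _ _ ht
    · exact absurd rfl hij
    · exact htv _ _
    · exact anti' _ _ (htv _ _)
    · exact anti' _ _ (htv _ _)
    · exact hv _ _ (fun h => hij (by rw [h]))
  have g3 : ∀ k, (ℓ ∘ₗ M.mulVecLin) (veron (m + 3) ((Fin.cons (t 0) (Fin.cons (t 1) vs : Fin (m + 2) → Fin 2 → ℂ) : Fin (m + 3) → Fin 2 → ℂ) k)) = 0 := by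
    intro k
    refine Fin.cases ?_ (fun k => Fin.cases ?_ (fun k => ?_) k) k
    · exact h2 0
    · exact h2 1
    · exact h1 k
  obtain ⟨c, hc⟩ := form_lemma (m + 3) _ g1 g2 (ℓ ∘ₗ M.mulVecLin) g3
  refine ⟨c, fun v => ?_⟩
  have := hc v
  rw [Fin.prod_univ_succ, Fin.prod_univ_succ] at this
  simp only [Fin.cons_zero, Fin.cons_succ, LinearMap.comp_apply, Matrix.mulVecLin_apply] at this
  rw [this]; ring

theorem core {m : ℕ} (M : Matrix (Fin (m + 3 + 1)) (Fin (m + 3 + 1)) ℂ)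
    (P : Fin 2 → Matrix (Fin (m + 3 + 1)) (Fin (m + 1)) ℂ)
    (a b : Fin 3 → Fin (m + 3 + 1) → ℂ)
    (vs : Fin 2 → Fin (m + 1) → Fin 2 → ℂ) (hv0 : ∀ q i, vs q i ≠ 0)
    (hv : ∀ q i j, i ≠ j → wdg (vs q i) (vs q j) ≠ 0)
    (hvP : ∀ q i, M.mulVec (veron (m + 3) (vs q i)) ∈
        Submodule.span ℂ (Set.range fun j => fun r => P q r j))
    (t : Fin 3 → Fin 2 → Fin 2 → ℂ) (ht0 : ∀ i e, t i e ≠ 0)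
    (htw : ∀ i, wdg (t i 0) (t i 1) ≠ 0)
    (htz : ∀ i e, M.mulVec (veron (m + 3) (t i e)) ≠ 0)
    (htn : ∀ i, ∀ c : ℂ, M.mulVec (veron (m + 3) (t i 0)) ≠ c • M.mulVec (veron (m + 3) (t i 1)))
    (htP : ∀ i e, ∃ s u : ℂ, M.mulVec (veron (m + 3) (t i e)) = s • a i + u • b i) :
    genF (P 0) (P 1) a b = 0 := by
  choose S U hSU using htP
  by_contra hF
  set X : Fin 2 → Fin 3 → (Fin (m + 3 + 1) → ℂ) →ₗ[ℂ] ℂ := fun q j => brl (P q) (a j) (b j)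
    with hX
  have hSU0 : ∀ i e, ¬ (S i e = 0 ∧ U i e = 0) := by
    rintro i e ⟨h, h'⟩
    apply htz i e
    rw [hSU, h, h']; simp
  have hdet : ∀ i, S i 0 * U i 1 - S i 1 * U i 0 ≠ 0 := by
    intro i h
    have hne : (![S i 1, U i 1] : Fin 2 → ℂ) ≠ 0 := by
      intro h0
      exact hSU0 i 1 ⟨by simpa using congrFun h0 0, by simpa using congrFun h0 1⟩
    obtain ⟨l, hl⟩ := wdg_prop (t := ![S i 0, U i 0]) hne (by
      simp only [wdg, Matrix.cons_val_zero, Matrix.cons_val_one]; linear_combination h)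
    have e0 : S i 0 = l * S i 1 := by simpa using congrFun hl 0
    have e1 : U i 0 = l * U i 1 := by simpa using congrFun hl 1
    apply htn i l
    rw [hSU, hSU, e0, e1, smul_add, smul_smul, smul_smul]
  have hXp : ∀ q j i e, X q j (M.mulVec (veron (m + 3) (t i e))) =
      S i e * X q j (a i) + U i e * X q j (b i) := by
    intro q j i e
    rw [hSU, map_add, map_smul, map_smul]; rfl
  have hF' : fullF (fun j i => X 0 j (a i)) (fun j i => X 0 j (b i))
    (fun j i => X 1 j (a i)) (fun j i => X 1 j (b i)) ≠ 0 := hF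
  simp only [fullF, nd, carnot, ey, ne_eq, mul_eq_zero, not_or] at hF'
  obtain ⟨⟨⟨⟨⟨x0, y0⟩, ej0, ek0⟩, ⟨x1, y1⟩, ej1, ek1⟩, ⟨x2, y2⟩, ej2, ek2⟩, hcar⟩ := hF'
  have hind : ∀ q i, ∃ j k, X q j (b i) * X q k (a i) - X q j (a i) * X q k (b i) ≠ 0 := by
    intro q i
    fin_cases q <;> fin_cases i
    · exact ⟨1, 2, x0⟩
    · exact ⟨2, 0, x1⟩
    · exact ⟨0, 1, x2⟩
    · exact ⟨1, 2, y0⟩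
    · exact ⟨2, 0, y1⟩
    · exact ⟨0, 1, y2⟩
  have htv : ∀ q i e k, wdg (t i e) (vs q k) ≠ 0 := by
    intro q i e k h
    obtain ⟨l, hl⟩ := wdg_prop (hv0 q k) h
    have hz : ∀ j, S i e * X q j (a i) + U i e * X q j (b i) = 0 := by
      intro j
      rw [← hXp, hl, veron_smul, Matrix.mulVec_smul, map_smul]
      have : X q j (M.mulVec (veron (m + 3) (vs q k))) = 0 := brl_span _ _ _ _ (hvP q k)
      rw [this, smul_zero]
    obtain ⟨j, k', hjk⟩ := hind q i
    exact hSU0 i e (lin2 (hz j) (hz k') hjk)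
  have hform : ∀ q j, ∃ c : ℂ, ∀ v, X q j (M.mulVec (veron (m + 3) v)) =
      c * (wdg v (t j 0) * wdg v (t j 1) * ∏ k, wdg v (vs q k)) := by
    intro q j
    refine formL M (vs q) (hv0 q) (hv q) (t j) (ht0 j) (htw j) (htv q j) (X q j) ?_ ?_
    · intro k
      exact brl_span _ _ _ _ (hvP q k)
    · intro e
      rw [hXp]
      have e1 : X q j (a j) = 0 := brl_self1 _ _ _
      have e2 : X q j (b j) = 0 := brl_self2 _ _ _
      rw [e1, e2]; simp
  choose c hc using hform
  have E : ∀ q j i e, S i e * X q j (a i) + U i e * X q j (b i) =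
      c q j * (wdg (t i e) (t j 0) * wdg (t i e) (t j 1) * ∏ k, wdg (t i e) (vs q k)) := by
    intro q j i e
    rw [← hXp, hc]
  obtain ⟨c1, d1, r01, r02, R0⟩ := line_core (hdet 0) x0 y0 ej0 ek0 (E 0 1 0 0) (E 0 1 0 1)
    (E 0 2 0 0) (E 0 2 0 1) (E 1 1 0 0) (E 1 1 0 1) (E 1 2 0 0) (E 1 2 0 1)
  obtain ⟨c2, d2, r12, r10, R1⟩ := line_core (hdet 1) x1 y1 ej1 ek1 (E 0 2 1 0) (E 0 2 1 1)
    (E 0 0 1 0) (E 0 0 1 1) (E 1 2 1 0) (E 1 2 1 1) (E 1 0 1 0) (E 1 0 1 1)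
  obtain ⟨c0, d0, r20, r21, R2⟩ := line_core (hdet 2) x2 y2 ej2 ek2 (E 0 0 2 0) (E 0 0 2 1)
    (E 0 1 2 0) (E 0 1 2 1) (E 1 0 2 0) (E 1 0 2 1) (E 1 1 2 0) (E 1 1 2 1)
  have sym : ∀ i j, wdg (t i 0) (t j 0) * wdg (t i 0) (t j 1) *
      (wdg (t i 1) (t j 0) * wdg (t i 1) (t j 1)) = wdg (t j 0) (t i 0) * wdg (t j 0) (t i 1) *
      (wdg (t j 1) (t i 0) * wdg (t j 1) (t i 1)) := by
    intro i j; simp only [wdg]; ring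
  rw [sym 1 0] at R1
  rw [sym 2 0, sym 2 1] at R2
  apply hcar
  generalize wdg (t 0 0) (t 1 0) * wdg (t 0 0) (t 1 1) *
      (wdg (t 0 1) (t 1 0) * wdg (t 0 1) (t 1 1)) = ρ01 at *
  generalize wdg (t 0 0) (t 2 0) * wdg (t 0 0) (t 2 1) *
      (wdg (t 0 1) (t 2 0) * wdg (t 0 1) (t 2 1)) = ρ02 at *
  generalize wdg (t 1 0) (t 2 0) * wdg (t 1 0) (t 2 1) *
      (wdg (t 1 1) (t 2 0) * wdg (t 1 1) (t 2 1)) = ρ12 at *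
  have hnz : (c 0 0 * c 0 1 * c 0 2) * (c 1 0 * c 1 1 * c 1 2) * (ρ01 * ρ02 * ρ12) ≠ 0 := by
    simp only [ne_eq, mul_eq_zero, not_or]
    exact ⟨⟨⟨⟨c0, c1⟩, c2⟩, ⟨d0, d1⟩, d2⟩, ⟨r01, r02⟩, r12⟩
  apply (mul_eq_zero.mp (_ : _ * _ = (0 : ℂ))).resolve_left hnz
  have key := congrArg₂ (· * ·) (congrArg₂ (· * ·) R0 R1) R2

  linear_combination key

def wE (m : ℕ) (τ : Equiv.Perm (Fin (m + 1) ⊕ Fin 3)) (k : Fin 3) (r : Fin (m + 3 + 1)) : ℂ :=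
  if r = finSumFinEquiv (m := m + 1) (n := 3) (τ (Sum.inr k)) then 1 else 0

def wP (m : ℕ) (τ : Equiv.Perm (Fin (m + 1) ⊕ Fin 3)) :
    Matrix (Fin (m + 3 + 1)) (Fin (m + 1)) ℂ := fun r j =>
  if r = finSumFinEquiv (m := m + 1) (n := 3) (τ (Sum.inl j)) then 1 else 0

theorem exists_perm (m : ℕ) (hm : 2 ≤ m) : ∃ τ : Equiv.Perm (Fin (m + 1) ⊕ Fin 3),
    ∀ k l, τ (Sum.inr k) ≠ Sum.inr l := by
  refine ⟨Equiv.swap (Sum.inl ⟨0, by omega⟩) (Sum.inr 0) *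
    Equiv.swap (Sum.inl ⟨1, by omega⟩) (Sum.inr 1) *
    Equiv.swap (Sum.inl ⟨2, by omega⟩) (Sum.inr 2), ?_⟩
  intro k l
  fin_cases k <;> simp [Equiv.swap_apply_def]

theorem witness (m : ℕ) (hm : 2 ≤ m) : ∃ (P : Fin 2 → Matrix (Fin (m + 3 + 1)) (Fin (m + 1)) ℂ)
    (a b : Fin 3 → Fin (m + 3 + 1) → ℂ), genF (P 0) (P 1) a b ≠ 0 := by
  obtain ⟨τ, hτ⟩ := exists_perm m hm
  have hτ' : ∀ k l, Sum.inr l ≠ τ (Sum.inr k) := fun k l => (hτ k l).symm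
  refine ⟨![wP m 1, wP m τ], ![wE m 1 1 + wE m τ 2, wE m 1 2 + wE m τ 0, wE m 1 0 + wE m τ 1],
    ![wE m 1 2 + wE m τ 1, wE m 1 0 + wE m τ 2, wE m 1 1 + wE m τ 0], ?_⟩
  have h1 := br_coord (m := m) 1 (wP m 1) (fun r j => rfl)
  have h2 := br_coord (m := m) τ (wP m τ) (fun r j => rfl)
  simp only [Matrix.cons_val_zero, Matrix.cons_val_one]
  have w1 : ∀ k l, wE m 1 k (finSumFinEquiv (m := m + 1) (n := 3) ((1 : Equiv.Perm (Fin (m + 1) ⊕ Fin 3)) (Sum.inr l))) =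
      if l = k then 1 else 0 := by intro k l; simp [wE]
  have w2 : ∀ k l, wE m τ k (finSumFinEquiv (m := m + 1) (n := 3) (τ (Sum.inr l))) =
      if l = k then 1 else 0 := by
    intro k l
    simp only [wE, EmbeddingLike.apply_eq_iff_eq, Sum.inr.injEq]
  have w3 : ∀ k l, wE m τ k (finSumFinEquiv (m := m + 1) (n := 3) ((1 : Equiv.Perm (Fin (m + 1) ⊕ Fin 3)) (Sum.inr l))) =
      0 := by
    intro k l
    simp only [wE, EmbeddingLike.apply_eq_iff_eq, Equiv.Perm.one_apply, hτ', if_false]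
  have w4 : ∀ k l, wE m 1 k (finSumFinEquiv (m := m + 1) (n := 3) (τ (Sum.inr l))) = 0 := by
    intro k l
    simp only [wE, EmbeddingLike.apply_eq_iff_eq, Equiv.Perm.one_apply, hτ, if_false]
  simp only [genF, h1, h2, Matrix.det_fin_three]
  generalize hs : ((Equiv.Perm.sign τ : ℤ) : ℂ) = σ
  have hs0 : σ = 1 ∨ σ = -1 := by
    rcases Int.units_eq_one_or (Equiv.Perm.sign τ) with h | h <;> simp [h] at hs <;> simp [← hs]
  simp only [fullF, nd, carnot, ey, Matrix.of_apply, Matrix.cons_val_zero, Matrix.cons_val_one,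
    Matrix.cons_val, Pi.add_apply, w1, w2, w3, w4]
  rcases hs0 with h | h <;> simp [h] <;> norm_num

/-- The weight vector `(0,3,0,…,0,2,0)` in `ℙⁿ`, `n ≥ 5` (three generic lines and two
generic `(n-3)`-dimensional subspaces), is non-feasible: generically no rational normal
curve meets each line in exactly 2 points and each `(n-3)`-dimensional subspace in
exactly `n-2` points. -/
theorem three_lines_two_codim3_nonfeasible (n : ℕ) (hn : 5 ≤ n)
    (L : Fin (n - 1) → ℕ)
    (hL : L = fun j => if j.1 = 1 then 3 else if j.1 = n - 3 then 2 else 0) :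
    NonFeasible n L := by
  obtain ⟨m, rfl⟩ : ∃ m, n = m + 3 := ⟨n - 3, by omega⟩
  have hm : 2 ≤ m := by omega
  let i1 : Fin (m + 3 - 1) := ⟨1, by omega⟩
  let i2 : Fin (m + 3 - 1) := ⟨m, by omega⟩
  have hL1 : L i1 = 3 := by rw [hL]; simp [i1]
  have hL2 : L i2 = 2 := by
    rw [hL]
    have : m ≠ 1 := by omega
    simp [i2, this]
  let k1 : Fin 3 → Fin (L i1) := Fin.cast hL1.symm
  let k2 : Fin 2 → Fin (L i2) := Fin.cast hL2.symm
  let V := MvPolynomial ((i : Fin (m + 3 - 1)) × (Fin (L i) × Fin (m + 3 + 1) × Fin (i.1 + 1))) ℂ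
  let PX : Fin 2 → Matrix (Fin (m + 3 + 1)) (Fin (m + 1)) V :=
    fun q r j => MvPolynomial.X ⟨i2, k2 q, r, j⟩
  let aX : Fin 3 → Fin (m + 3 + 1) → V :=
    fun q r => MvPolynomial.X ⟨i1, k1 q, r, (0 : Fin 2)⟩
  let bX : Fin 3 → Fin (m + 3 + 1) → V :=
    fun q r => MvPolynomial.X ⟨i1, k1 q, r, (1 : Fin 2)⟩
  have hev : ∀ A : Config (m + 3) L,
      MvPolynomial.eval (fun p => A p.1 p.2.1 p.2.2.1 p.2.2.2) (genF (PX 0) (PX 1) aX bX) =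
      genF (m := m) (A i2 (k2 0)) (A i2 (k2 1)) (fun q r => A i1 (k1 q) r (0 : Fin 2))
        (fun q r => A i1 (k1 q) r (1 : Fin 2)) := by
    intro A
    rw [genF_map]
    have e1 : ∀ q, (PX q).map (MvPolynomial.eval (fun p => A p.1 p.2.1 p.2.2.1 p.2.2.2)) =
        A i2 (k2 q) := by
      intro q; ext r j
      rw [Matrix.map_apply]
      simp [PX]
    have e2 : ∀ q r, MvPolynomial.eval (fun p => A p.1 p.2.1 p.2.2.1 p.2.2.2) (aX q r) =
        A i1 (k1 q) r (0 : Fin 2) := by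
      intro q r
      simp [aX]
    have e3 : ∀ q r, MvPolynomial.eval (fun p => A p.1 p.2.1 p.2.2.1 p.2.2.2) (bX q r) =
        A i1 (k1 q) r (1 : Fin 2) := by
      intro q r
      simp [bX]
    rw [e1, e1]
    simp only [e2, e3]
  refine ⟨genF (PX 0) (PX 1) aX bX, ?_, ?_⟩
  · intro h0
    obtain ⟨P, a, b, hw⟩ := witness m hm
    apply hw
    let A0 : Config (m + 3) L := fun i q r c =>
      if i.1 = 1 then
        (if c.1 = 0 then a (Fin.ofNat 3 q.1) r else b (Fin.ofNat 3 q.1) r)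
      else P (Fin.ofNat 2 q.1) r (Fin.ofNat (m + 1) c.1)
    have := hev A0
    rw [h0, map_zero] at this
    rw [this]
    have hm1 : m ≠ 1 := by omega
    have e1 : ∀ q, A0 i2 (k2 q) = P q := by
      intro q
      ext r j
      simp only [A0, i2, k2, hm1, if_false]
      congr 1
      · congr 1
        ext
        simp
      · ext
        simp
    have e2 : ∀ q r, A0 i1 (k1 q) r (0 : Fin 2) = a q r := by
      intro q r
      have hq : Fin.ofNat 3 q.1 = q := by ext; simp
      have : A0 i1 (k1 q) r (0 : Fin 2) = a (Fin.ofNat 3 q.1) r := rfl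
      rw [this, hq]
    have e3 : ∀ q r, A0 i1 (k1 q) r (1 : Fin 2) = b q r := by
      intro q r
      have hq : Fin.ofNat 3 q.1 = q := by ext; simp
      have : A0 i1 (k1 q) r (1 : Fin 2) = b (Fin.ofNat 3 q.1) r := rfl
      rw [this, hq]
    rw [e1, e1]
    simp only [e2, e3]
  · rintro A - hA ⟨C, ⟨M, -, hC⟩, hmax⟩
    apply hA
    rw [hev]
    have X1 := fun q => extract (k := 1) M C hC (A i1 (k1 q)) (hmax i1 (k1 q))
    have X2 := fun q => extract (k := m) M C hC (A i2 (k2 q)) (hmax i2 (k2 q))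
    choose t t1 t2 t3 t4 t5 using X1
    choose v v1 v2 v3 v4 v5 using X2
    refine core M (fun q => A i2 (k2 q)) _ _ v v1 v4 v5 t t1 (fun i => t4 i 0 1 (by simp)) t2
      (fun i => t3 i 0 1 (by simp)) (fun i e => ?_)
    have := t5 i e
    rw [Submodule.mem_span_range_iff_exists_fun] at this
    obtain ⟨c, hc⟩ := this
    refine ⟨c (0 : Fin 2), c (1 : Fin 2), ?_⟩
    rw [← hc]
    exact Fin.sum_univ_two (fun j : Fin 2 => c j • fun r => A i1 (k1 i) r j)

end
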